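/- arXiv:2204.01272 — 2 statements merged into one kernel-verified Lean document; each statement's English description precedes it below -/
import Mathlib

section
/- For all x, y ∈ ℝⁿ₊ with x ≠ y, one has |x−y|^{−n−2s} − |x_*−y|^{−n−2s} ≥ 2(n+2s)·x₁·y₁·|x_*−y|^{−n−2s−2}. -/
/-!
Write `a = |x - y|`, `b = |x_* - y|`, `q = n + 2s`. Expanding the square gives
`b² - a² = 4 x₁ y₁` (`norm_sq_reflFirst_sub`). Since `t ↦ t ^ (-q/2)` is convex on `(0, ∞)`, it lies
above its tangent at `b²`; evaluated at `a²` this is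
`a ^ (-q) - b ^ (-q) ≥ (q/2) (b² - a²) b ^ (-q-2)` (`rpow_neg_sub_ge`), obtained from
Bernoulli's inequality for negative exponents (`one_sub_mul_le_rpow_neg`), and substituting `b² - a²` gives the claim.
-/

open MeasureTheory Metric Filter Topology

noncomputable section

/-- Euclidean space `ℝⁿ`. -/
abbrev Euc (n : ℕ) := EuclideanSpace ℝ (Fin n)

/-- Reflection `x ↦ x_* = (-x₁, x')` across the hyperplane `{x₁ = 0}`. -/
def reflFirst (n : ℕ) [NeZero n] (x : Euc n) : Euc n :=
  x - (2 * x 0) • EuclideanSpace.single 0 1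

/-- The open half space `ℝⁿ₊ = {x : x₁ > 0}`. -/
def halfSpace (n : ℕ) [NeZero n] : Set (Euc n) := {x | 0 < x 0}

/-- `u` is antisymmetric: `u(x_*) = -u(x)`. -/
def AntiSymmFn (n : ℕ) [NeZero n] (u : Euc n → ℝ) : Prop :=
  ∀ x, u (reflFirst n x) = - u x

/-- The normalising constant `c_{n,s}` of the fractional Laplacian. -/
def cns (n : ℕ) (s : ℝ) : ℝ :=
  s * (4 : ℝ) ^ s * Real.Gamma (((n : ℝ) + 2 * s) / 2) /
    (Real.pi ^ ((n : ℝ) / 2) * Real.Gamma (1 - s))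

/-- The constant `γ_{n,s}` of the mean value formula. -/
def gammans (n : ℕ) (s : ℝ) : ℝ :=
  Real.sin (Real.pi * s) * Real.Gamma ((n : ℝ) / 2) / Real.pi ^ ((n : ℝ) / 2 + 1)

/-- The first standard basis vector `e₁`. -/
def e1 (n : ℕ) [NeZero n] : Euc n := EuclideanSpace.single 0 1

/-- `‖u‖_{𝒜ₛ(ℝⁿ)} = ∫_{ℝⁿ₊} x₁|u(x)|/(1+|x|^{n+2s+2}) dx`. -/
def ANorm (n : ℕ) [NeZero n] (s : ℝ) (u : Euc n → ℝ) : ℝ :=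
  ∫ x in halfSpace n, x 0 * |u x| / (1 + ‖x‖ ^ ((n : ℝ) + 2 * s + 2))

/-- `u ∈ 𝒜ₛ(ℝⁿ)`. -/
def MemA (n : ℕ) [NeZero n] (s : ℝ) (u : Euc n → ℝ) : Prop :=
  AntiSymmFn n u ∧ LocallyIntegrable u volume ∧
    IntegrableOn (fun x => x 0 * |u x| / (1 + ‖x‖ ^ ((n : ℝ) + 2 * s + 2))) (halfSpace n) volume

/-- `u ∈ ℒₛ(ℝⁿ)`. -/
def MemL (n : ℕ) (s : ℝ) (u : Euc n → ℝ) : Prop :=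
  LocallyIntegrable u volume ∧
    Integrable (fun x => |u x| / (1 + ‖x‖ ^ ((n : ℝ) + 2 * s))) volume

/-- Membership in the Hölder space `C^β = C^{⌊β⌋, β-⌊β⌋}` on `Ω`. -/
def MemHolderOn {X : Type*} [NormedAddCommGroup X] [NormedSpace ℝ X]
    (β : ℝ) (Ω : Set X) (u : X → ℝ) : Prop :=
  ContDiffOn ℝ (⌊β⌋₊ : ℕ) u Ω ∧
    ∃ C : NNReal, HolderOnWith C (β - ⌊β⌋₊).toNNReal (iteratedFDerivWithin ℝ ⌊β⌋₊ u Ω) Ω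

/-- `K` bounds the `C^β = C^{⌊β⌋, β-⌊β⌋}` norm of `u` on `Ω`. -/
def HolderBoundBy {X : Type*} [NormedAddCommGroup X] [NormedSpace ℝ X]
    (β : ℝ) (Ω : Set X) (u : X → ℝ) (K : ℝ) : Prop :=
  (∀ i ≤ ⌊β⌋₊, ∀ x ∈ Ω, ‖iteratedFDerivWithin ℝ i u Ω x‖ ≤ K) ∧
    HolderOnWith K.toNNReal (β - ⌊β⌋₊).toNNReal (iteratedFDerivWithin ℝ ⌊β⌋₊ u Ω) Ω

/-- `β` is not an integer. -/
def NotInteger (β : ℝ) : Prop := ∀ k : ℤ, β ≠ k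

/-- The antisymmetric kernel `|x-y|^{-n-2s} - |x_*-y|^{-n-2s}`. -/
def aKernel (n : ℕ) [NeZero n] (s : ℝ) (x y : Euc n) : ℝ :=
  ‖x - y‖ ^ (-((n : ℝ) + 2 * s)) - ‖reflFirst n x - y‖ ^ (-((n : ℝ) + 2 * s))

/-- `(-Δ)ˢ u (x) = L` in the antisymmetric sense of Definition 1.4:
the truncated integrals over `ℝⁿ₊ ∖ B_ε(x)` (plus the constant zero-th order term)
converge to `L` as `ε → 0⁺`. -/
def HasAntiFracLap (n : ℕ) [NeZero n] (s : ℝ) (u : Euc n → ℝ) (x : Euc n) (L : ℝ) : Prop :=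
  Filter.Tendsto
    (fun ε : ℝ =>
      cns n s * (∫ y in halfSpace n \ Metric.ball x ε, aKernel n s x y * (u x - u y)) +
        (cns 1 s / s) * u x * (x 0) ^ (-(2 * s)))
    (𝓝[>] (0 : ℝ)) (𝓝 L)

/-- `(-Δ)ˢ u (x) = L` in the principal value sense. -/
def HasPVFracLap (n : ℕ) (s : ℝ) (u : Euc n → ℝ) (x : Euc n) (L : ℝ) : Prop :=
  Filter.Tendsto
    (fun ε : ℝ =>
      cns n s * ∫ y in (Metric.ball x ε)ᶜ, (u x - u y) / ‖x - y‖ ^ ((n : ℝ) + 2 * s))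
    (𝓝[>] (0 : ℝ)) (𝓝 L)


/-- Polarisation identity: reflecting `x` adds `4 x₁ y₁` to the squared distance to `y`. -/
theorem norm_sq_reflFirst_sub (n : ℕ) [NeZero n] (x y : Euc n) :
    ‖reflFirst n x - y‖ ^ 2 = ‖x - y‖ ^ 2 + 4 * x 0 * y 0 := by
  have h : reflFirst n x - y = (x - y) - (2 * x 0) • EuclideanSpace.single 0 (1 : ℝ) := by
    unfold reflFirst; abel
  rw [h, norm_sub_sq_real, inner_smul_right, EuclideanSpace.inner_single_right, norm_smul]
  simp only [PiLp.norm_single, PiLp.sub_apply, mul_pow, Real.norm_eq_abs, sq_abs]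
  simp
  ring

/-- Bernoulli's inequality for negative exponents, from `1 + u ≤ exp u` and `log t ≤ t - 1`. -/
theorem one_sub_mul_le_rpow_neg {t p : ℝ} (ht : 0 < t) (hp : 0 ≤ p) :
    1 + (-p) * (t - 1) ≤ t ^ (-p) := by
  rw [Real.rpow_def_of_pos ht]
  nlinarith [Real.add_one_le_exp (Real.log t * -p),
    mul_le_mul_of_nonneg_left (Real.log_le_sub_one_of_pos ht) hp]

/-- The function `t ↦ t ^ (-q / 2)` lies above its tangent at `b ^ 2`, evaluated at `a ^ 2`. -/
theorem rpow_neg_sub_ge {a b q : ℝ} (ha : 0 < a) (hb : 0 < b) (hq : 0 < q) :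
    q / 2 * (b ^ 2 - a ^ 2) * b ^ (-(q + 2)) ≤ a ^ (-q) - b ^ (-q) := by
  have hr : 0 < a / b := div_pos ha hb
  have bern : 1 + (-(q / 2)) * ((a / b) ^ 2 - 1) ≤ ((a / b) ^ 2) ^ (-(q / 2)) :=
    one_sub_mul_le_rpow_neg (by positivity) (by linarith)
  have e1 : ((a / b) ^ 2) ^ (-(q / 2)) = a ^ (-q) / b ^ (-q) := by
    rw [← Real.div_rpow ha.le hb.le, ← Real.rpow_natCast, ← Real.rpow_mul hr.le]
    congr 1
    push_cast
    ring
  have e2 : b ^ (-(q + 2)) = b ^ (-q) / b ^ 2 := by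
    rw [neg_add, ← sub_eq_add_neg, Real.rpow_sub hb, Real.rpow_two]
  have hB : 0 < b ^ (-q) := Real.rpow_pos_of_pos hb _
  rw [e1, le_div_iff₀ hB] at bern
  rw [e2]
  have e3 : q / 2 * (b ^ 2 - a ^ 2) * (b ^ (-q) / b ^ 2)
      = (1 + (-(q / 2)) * ((a / b) ^ 2 - 1)) * b ^ (-q) - b ^ (-q) := by
    field_simp
    ring
  linarith

/-- elementary lower bound for the antisymmetric kernel
(inequality (2.7)). -/
theorem stmt8
    (n : ℕ) [NeZero n] (s : ℝ) (hs : s ∈ Set.Ioo (0 : ℝ) 1)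
    (x y : Euc n) (hx : x ∈ halfSpace n) (hy : y ∈ halfSpace n) (hxy : x ≠ y) :
    2 * ((n : ℝ) + 2 * s) * x 0 * y 0 * ‖reflFirst n x - y‖ ^ (-((n : ℝ) + 2 * s + 2)) ≤
      aKernel n s x y := by
  have hx0 : 0 < x 0 := hx
  have hy0 : 0 < y 0 := hy
  have ha : 0 < ‖x - y‖ := norm_pos_iff.mpr (sub_ne_zero.mpr hxy)
  have hid := norm_sq_reflFirst_sub n x y
  have hb : 0 < ‖reflFirst n x - y‖ := by
    refine (sq_pos_iff.mp ?_).lt_of_le' (norm_nonneg _)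
    rw [hid]
    positivity
  have hq : 0 < (n : ℝ) + 2 * s := by
    have := hs.1
    positivity
  have key := rpow_neg_sub_ge ha hb hq
  rw [hid] at key
  unfold aKernel
  refine le_trans (le_of_eq ?_) key
  ring

end
end

section
/- There exists C > 0 depending only on n and s with the following property: for every R ∈ (0,1) and every a in the closure of B₂⁺, if x ∈ B_{R/2}(a) ∩ ℝⁿ₊ and y ∈ ℝⁿ₊ ∖ B_R(a), then |x−y|^{−n−2s} − |x_*−y|^{−n−2s} ≤ C·R^{−n−2s−2}·x₁·y₁/(1+|y|^{n+2s+2}). -/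
/-!
Write `p = n + 2s`. Reflecting gives `|x_* - y|² = |x - y|² + 4 x₁ y₁`, so Bernoulli's
inequality (`rpow_neg_sub_le`) yields
`|x - y|^{-p} - |x_* - y|^{-p} ≤ 2 p x₁ y₁ |x - y|^{-(p+2)}`.
Since `|x - y| ≥ R/2` and `|x| ≤ 5/2`, one has `1 + |y| ≤ |x - y| + 7/2 ≤ 8 |x - y| / R`, and
`1 + |y|^{p+2} ≤ (1 + |y|)^{p+2}` turns this into the claimed decay, with
`C = 2 p 8^{p+2}`.
-/

open MeasureTheory Metric Filter Topology

noncomputable section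

lemma norm_reflFirst_sub_sq (n : ℕ) [NeZero n] (x y : Euc n) :
    ‖reflFirst n x - y‖ ^ 2 = ‖x - y‖ ^ 2 + 4 * (x 0 * y 0) := by
  have h : reflFirst n x - y = (x - y) - (2 * x 0) • EuclideanSpace.single (0 : Fin n) (1 : ℝ) := by
    unfold reflFirst; abel
  rw [h, norm_sub_sq_real, inner_smul_right, norm_smul, EuclideanSpace.inner_single_right]
  simp only [EuclideanSpace.norm_single, mul_pow, Real.norm_eq_abs, sq_abs]
  simp
  ring

/-- Bernoulli-type bound for `t ↦ t^{-p/2}` between `d²` and `D² = d² + 4k`. -/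
lemma rpow_neg_sub_le {d D k p : ℝ} (hd : 0 < d) (hD : 0 < D) (hp : 0 < p)
    (h : D ^ 2 = d ^ 2 + 4 * k) :
    d ^ (-p) - D ^ (-p) ≤ 2 * p * k * d ^ (-(p + 2)) := by
  have hlog : Real.log (D / d) ≤ 2 * k / d ^ 2 := by
    have h1 := Real.log_le_sub_one_of_pos (show 0 < (D / d) ^ 2 by positivity)
    rw [Real.log_pow, div_pow, h] at h1
    have h2 : (d ^ 2 + 4 * k) / d ^ 2 - 1 = 2 * (2 * k / d ^ 2) := by
      field_simp; ring
    rw [h2] at h1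
    push_cast at h1
    linarith
  have hexp : 1 - p * (2 * k / d ^ 2) ≤ (D / d) ^ (-p) := by
    rw [Real.rpow_def_of_pos (by positivity)]
    have := Real.add_one_le_exp (Real.log (D / d) * -p)
    nlinarith
  have hDd : D ^ (-p) = d ^ (-p) * (D / d) ^ (-p) := by
    rw [← Real.mul_rpow hd.le (by positivity)]
    congr 1; field_simp
  have hd2 : d ^ (-(p + 2)) = d ^ (-p) / d ^ 2 := by
    rw [neg_add, ← sub_eq_add_neg, Real.rpow_sub hd, Real.rpow_two]
  have hdp : 0 < d ^ (-p) := Real.rpow_pos_of_pos hd _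
  rw [hDd, hd2]
  have := mul_le_mul_of_nonneg_left hexp hdp.le
  calc d ^ (-p) - d ^ (-p) * (D / d) ^ (-p)
      ≤ d ^ (-p) - d ^ (-p) * (1 - p * (2 * k / d ^ 2)) := by linarith
    _ = 2 * p * k * (d ^ (-p) / d ^ 2) := by ring

/-- uniform kernel bound away from `B_R(a)` (Lemma 3.5). -/
theorem stmt13
    (n : ℕ) [NeZero n] (s : ℝ) (hs : s ∈ Set.Ioo (0 : ℝ) 1) :
    ∃ C > (0 : ℝ), ∀ (R : ℝ), R ∈ Set.Ioo (0 : ℝ) 1 →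
      ∀ a ∈ closure (Metric.ball (0 : Euc n) 2 ∩ halfSpace n),
      ∀ x ∈ Metric.ball a (R / 2) ∩ halfSpace n,
      ∀ y ∈ halfSpace n \ Metric.ball a R,
        aKernel n s x y ≤
          C * R ^ (-((n : ℝ) + 2 * s + 2)) *
            (x 0 * y 0 / (1 + ‖y‖ ^ ((n : ℝ) + 2 * s + 2))) := by
  obtain ⟨hs0, -⟩ := hs
  have hn : (0 : ℝ) ≤ n := Nat.cast_nonneg n
  set p : ℝ := (n : ℝ) + 2 * s with hpdef
  have hp : 0 < p := by positivity
  refine ⟨2 * p * 8 ^ (p + 2), by positivity, ?_⟩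
  rintro R ⟨hR0, hR1⟩ a ha x ⟨hxa, hx⟩ y ⟨hy, hya⟩
  have hx0 : 0 < x 0 := hx
  have hy0 : 0 < y 0 := hy
  have ha2 : ‖a‖ ≤ 2 := by
    have h1 := closure_mono Set.inter_subset_left ha
    simpa using Metric.closure_ball_subset_closedBall h1
  rw [mem_ball, dist_eq_norm] at hxa
  rw [mem_ball, dist_eq_norm, not_lt] at hya
  have hd : R / 2 ≤ ‖x - y‖ := by
    have h1 := norm_sub_le_norm_sub_add_norm_sub y x a
    rw [norm_sub_rev y x] at h1
    linarith
  have hdpos : 0 < ‖x - y‖ := by linarith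
  have hyle : ‖y‖ ≤ ‖x - y‖ + 5 / 2 := by
    have h1 := norm_sub_le_norm_sub_add_norm_sub y x 0
    have h2 := norm_sub_le_norm_sub_add_norm_sub x a 0
    simp only [sub_zero] at h1 h2
    rw [norm_sub_rev y x] at h1
    linarith
  have hkey : R * (1 + ‖y‖) ≤ 8 * ‖x - y‖ := by nlinarith
  have hsq := norm_reflFirst_sub_sq n x y
  have hk : 0 < x 0 * y 0 := mul_pos hx0 hy0
  have hDpos : 0 < ‖reflFirst n x - y‖ := by
    refine lt_of_le_of_ne (norm_nonneg _) fun h0 => ?_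
    rw [← h0] at hsq
    nlinarith [sq_nonneg ‖x - y‖]
  have hker : aKernel n s x y ≤ 2 * p * (x 0 * y 0) * ‖x - y‖ ^ (-(p + 2)) :=
    rpow_neg_sub_le hdpos hDpos hp hsq
  have hdecay : ‖x - y‖ ^ (-(p + 2)) ≤
      8 ^ (p + 2) * R ^ (-(p + 2)) / (1 + ‖y‖ ^ (p + 2)) := by
    have h1 : 1 + ‖y‖ ^ (p + 2) ≤ (1 + ‖y‖) ^ (p + 2) := by
      have := Real.add_rpow_le_rpow_add zero_le_one (norm_nonneg y)
        (show 1 ≤ p + 2 by linarith)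
      simpa using this
    have h2 : R ^ (p + 2) * (1 + ‖y‖) ^ (p + 2) ≤ 8 ^ (p + 2) * ‖x - y‖ ^ (p + 2) := by
      rw [← Real.mul_rpow hR0.le (by positivity), ← Real.mul_rpow (by norm_num) hdpos.le]
      exact Real.rpow_le_rpow (by positivity) hkey (by positivity)
    have hRp : 0 < R ^ (p + 2) := Real.rpow_pos_of_pos hR0 _
    have hdp : 0 < ‖x - y‖ ^ (p + 2) := Real.rpow_pos_of_pos hdpos _
    rw [Real.rpow_neg hdpos.le, Real.rpow_neg hR0.le, ← div_eq_mul_inv, div_div,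
      inv_eq_one_div, div_le_div_iff₀ hdp (by positivity), one_mul]
    exact (mul_le_mul_of_nonneg_left h1 hRp.le).trans h2
  calc aKernel n s x y ≤ 2 * p * (x 0 * y 0) * ‖x - y‖ ^ (-(p + 2)) := hker
    _ ≤ 2 * p * (x 0 * y 0) * (8 ^ (p + 2) * R ^ (-(p + 2)) / (1 + ‖y‖ ^ (p + 2))) := by
        gcongr
    _ = _ := by ring

end
end
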